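/- arXiv:2605.06081 — 6 statements merged into one kernel-verified Lean document; each statement's English description precedes it below -/
import Mathlib

section
/- Decomposition of the softmax covariance (Theorem 1, output space): for every logit vector z ∈ ℝ^C with C ≥ 2 and true class ⋆, in the coordinate order (z_⋆, z_{−⋆}), the softmax covariance matrix satisfies diag(p) − p p^T = p_⋆ p_† (∇_z s)(∇_z s)^T + p_† B, where B is the block matrix with zero first row and column and lower-right block diag(ρ) − ρ ρ^T; moreover the residual block p_†(diag(ρ) − ρ ρ^T) is positive semidefinite. -/
/-!
Since `C ≥ 2`, some competitor has positive probability, so `p_† > 0` and `p j = p_† ρ j` for every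
`j ≠ ⋆`. The matrix identity is then checked entrywise, using `p_⋆ + p_† = 1`.

The residual `B` is itself a covariance matrix, `diag w - w wᵀ`, where `w` is `ρ` extended by zero
at `⋆`. As `w` is a probability vector, the quadratic form of `B` at `x` is the variance
`∑ w i (x i - m)²` with `m = ∑ w i x i`, hence nonnegative.
-/

/-- The covariance matrix of a one-hot vector drawn from the probability vector `w` is positive
semidefinite: its quadratic form at `x` is the variance of `x` under `w`. -/
lemma posSemidef_diagonal_sub_vecMulVec {ι : Type*} [Fintype ι] [DecidableEq ι] (w : ι → ℝ)
    (hw : ∀ i, 0 ≤ w i) (hsum : ∑ i, w i = 1) :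
    (Matrix.diagonal w - Matrix.vecMulVec w w).PosSemidef := by
  refine Matrix.PosSemidef.of_dotProduct_mulVec_nonneg ?_ fun x => ?_
  · ext i j
    simp only [Matrix.conjTranspose_apply, Matrix.sub_apply, Matrix.diagonal_apply,
      Matrix.vecMulVec_apply, star_trivial]
    by_cases h : i = j
    · simp [h]
    · simp [h, Ne.symm h, mul_comm]
  · have hvar : 0 ≤ ∑ i, w i * (x i - ∑ k, w k * x k) ^ 2 :=
      Finset.sum_nonneg fun i _ => mul_nonneg (hw i) (sq_nonneg _)
    have hexpand : ∀ m : ℝ, ∑ i, w i * (x i - m) ^ 2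
        = ∑ i, w i * x i ^ 2 - 2 * m * ∑ i, w i * x i + m ^ 2 * ∑ i, w i := fun m => by
      simp only [Finset.mul_sum, ← Finset.sum_sub_distrib, ← Finset.sum_add_distrib]
      exact Finset.sum_congr rfl fun i _ => by ring
    have hquad : star x ⬝ᵥ (Matrix.diagonal w - Matrix.vecMulVec w w).mulVec x
        = ∑ i, w i * x i ^ 2 - (∑ i, w i * x i) ^ 2 := by
      rw [Matrix.sub_mulVec, dotProduct_sub, Matrix.vecMulVec_mulVec]
      simp only [dotProduct, Matrix.mulVec_diagonal, star_trivial, Pi.smul_apply,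
        MulOpposite.smul_eq_mul_unop, MulOpposite.unop_op, sq, Finset.sum_mul]
      congr 1
      · exact Finset.sum_congr rfl fun i _ => by ring
      · exact Finset.sum_congr rfl fun i _ => by ring
    rw [hexpand, hsum] at hvar
    rw [hquad]
    linarith

/-- Theorem 1 (output space): decomposition of the softmax covariance.
In the coordinate order `(z_⋆, z_{-⋆})` (encoded here by keeping the full
index set and zeroing the `⋆` row/column of the residual block `B`),
`diag p - p pᵀ = p_⋆ p_† (∇_z s)(∇_z s)ᵀ + p_† B`, where `B` has zero `⋆`
row and column and lower-right block `diag ρ - ρ ρᵀ`; moreover the residual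
`p_† B` is positive semidefinite. -/
theorem softmax_covariance_decomposition
    (C : ℕ) (hC : 2 ≤ C) (star : Fin C) (z : Fin C → ℝ)
    (p : Fin C → ℝ) (hp : ∀ c, p c = Real.exp (z c) / ∑ j, Real.exp (z j))
    (pdag : ℝ) (hpdag : pdag = 1 - p star)
    (ρ : Fin C → ℝ) (hρ : ∀ j, j ≠ star → ρ j = p j / pdag)
    (g : Fin C → ℝ) (hg : ∀ c, g c = if c = star then -1 else ρ c)
    (B : Matrix (Fin C) (Fin C) ℝ)
    (hB : ∀ c c', B c c' =
      if c = star ∨ c' = star then 0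
      else (if c = c' then ρ c else 0) - ρ c * ρ c') :
    Matrix.diagonal p - Matrix.vecMulVec p p
      = (p star * pdag) • Matrix.vecMulVec g g + pdag • B ∧
    (pdag • B).PosSemidef := by
  have hZ : 0 < ∑ j, Real.exp (z j) :=
    Finset.sum_pos (fun j _ => Real.exp_pos _) ⟨star, Finset.mem_univ _⟩
  have hpos : ∀ c, 0 < p c := fun c => by
    rw [hp]
    exact div_pos (Real.exp_pos _) hZ
  have hsum : ∑ c, p c = 1 := by
    simp only [hp]
    rw [← Finset.sum_div, div_self hZ.ne']
  have hcomp : ∑ j ∈ Finset.univ.erase star, p j = pdag := by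
    have := Finset.add_sum_erase Finset.univ p (Finset.mem_univ star)
    linarith
  have hd : 0 < pdag := by
    have : Nontrivial (Fin C) := Fin.nontrivial_iff_two_le.mpr hC
    obtain ⟨j, hj⟩ := exists_ne star
    rw [← hcomp]
    exact Finset.sum_pos (fun c _ => hpos c) ⟨j, by simp [hj]⟩
  have hpρ : ∀ j, j ≠ star → p j = pdag * ρ j := fun j hj => by
    rw [hρ j hj, mul_div_cancel₀ _ hd.ne']
  have hstar : p star = 1 - pdag := by linarith
  refine ⟨?_, ?_⟩
  · ext c c'
    simp only [Matrix.sub_apply, Matrix.add_apply, Matrix.smul_apply, Matrix.diagonal_apply,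
      Matrix.vecMulVec_apply, smul_eq_mul, hg, hB]
    by_cases h : c = star
    · by_cases h' : c' = star
      · simp only [h, h', hstar, if_true, true_or]
        ring
      · simp only [h, h', Ne.symm h', hstar, hpρ c' h', if_true, if_false, true_or]
        ring
    · by_cases h' : c' = star
      · simp only [h, h', hstar, hpρ c h, if_true, if_false, or_true]
        ring
      · simp only [h, h', hstar, hpρ c h, hpρ c' h', if_false, or_self]
        split_ifs <;> ring
  -- `w` is `ρ` extended by zero at `⋆`; the value `ρ star` itself is unconstrained.
  · let w : Fin C → ℝ := fun j => if j = star then 0 else ρ j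
    have hBw : B = Matrix.diagonal w - Matrix.vecMulVec w w := by
      ext c c'
      simp only [hB, w, Matrix.sub_apply, Matrix.diagonal_apply, Matrix.vecMulVec_apply]
      by_cases h : c = star <;> by_cases h' : c' = star <;> simp [h, h']
    have hw : ∀ j, 0 ≤ w j := fun j => by
      by_cases h : j = star
      · simp [w, h]
      · simp only [w, h, if_false, hρ j h]
        exact (div_pos (hpos j) hd).le
    have hwsum : ∑ j, w j = 1 := by
      rw [← Finset.add_sum_erase Finset.univ w (Finset.mem_univ star)]
      have : ∑ j ∈ Finset.univ.erase star, w j = ∑ j ∈ Finset.univ.erase star, p j / pdag :=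
        Finset.sum_congr rfl fun j hj => by
          have hj' := Finset.ne_of_mem_erase hj
          simp only [w, hj', if_false, hρ j hj']
      rw [this, ← Finset.sum_div, hcomp, div_self hd.ne']
      simp [w]
    rw [hBw]
    exact (posSemidef_diagonal_sub_vecMulVec w hw hwsum).smul hd.le
end

section
/- Decomposition of the multiclass softmax GGN (Theorem 1, parameter space): for every logit vector z ∈ ℝ^C with C ≥ 2 and true class ⋆, and every matrix J_z ∈ ℝ^{C×d} with rows J_⋆ (true class) and J_{−⋆} ∈ ℝ^{(C−1)×d} (competitors), one has J_z^T (diag(p) − p p^T) J_z = p_⋆ p_† J_s^T J_s + p_† J_{−⋆}^T (diag(ρ) − ρ ρ^T) J_{−⋆}, where J_s = −J_⋆ + ρ^T J_{−⋆}. -/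
/-!
The matrix `diag w - w wᵀ` is the covariance form of the weights `w`:
`(Aᵀ (diag w - w wᵀ) A) i j = ∑ w A_i A_j - (∑ w A_i) (∑ w A_j)` (`covariance_apply`).
Since `C ≥ 2`, the competitor mass `p_†` is nonzero, so `p_c = p_† ρ_c` for each competitor `c`.
Splitting the sums over all classes into the true class and the competitors expresses both sides
through `J_⋆` and the first and second `ρ`-moments of the competitor rows, and the identity becomes
the law of total variance for a two-group mixture with weights `p_⋆` and `p_† = 1 - p_⋆`: the first
term is the between-group part and the second the within-group part.
-/

lemma covariance_apply {ι κ : Type*} [Fintype ι] [DecidableEq ι]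
    (A : Matrix ι κ ℝ) (w : ι → ℝ) (i j : κ) :
    (A.transpose * (Matrix.diagonal w - Matrix.vecMulVec w w) * A) i j
      = ∑ c, w c * (A c i * A c j) - (∑ c, w c * A c i) * ∑ c, w c * A c j := by
  rw [Matrix.mul_sub, Matrix.sub_mul, Matrix.sub_apply, Matrix.mul_vecMulVec,
    Matrix.vecMulVec_mul, Matrix.vecMulVec_apply, Matrix.mul_apply]
  simp only [Matrix.mul_diagonal, Matrix.transpose_apply, Matrix.mulVec, Matrix.vecMul,
    dotProduct]
  congr 1
  · exact Finset.sum_congr rfl fun c _ => by ring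
  · congr 1
    exact Finset.sum_congr rfl fun c _ => by ring

lemma softmax_lt_one {C : ℕ} (hC : 2 ≤ C) (star : Fin C) (z : Fin C → ℝ) :
    Real.exp (z star) / ∑ j, Real.exp (z j) < 1 := by
  have : Nontrivial (Fin C) := Fin.nontrivial_iff_two_le.mpr hC
  obtain ⟨c, hc⟩ := exists_ne star
  have hlt : Real.exp (z star) < ∑ j, Real.exp (z j) :=
    Finset.single_lt_sum (f := fun j => Real.exp (z j)) hc (Finset.mem_univ _)
      (Finset.mem_univ _) (Real.exp_pos _) fun _ _ _ => (Real.exp_pos _).le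
  exact (div_lt_one ((Real.exp_pos _).trans hlt)).mpr hlt

/-- Theorem 1 (parameter space): decomposition of the multiclass softmax GGN.
With competitor rows `Jm` (the rows of `Jz` indexed by classes `c ≠ ⋆`) and
margin Jacobian row `Js = -J_⋆ + ρᵀ Jm`,
`Jzᵀ (diag p - p pᵀ) Jz = p_⋆ p_† Jsᵀ Js + p_† Jmᵀ (diag ρ - ρ ρᵀ) Jm`. -/
theorem softmax_ggn_decomposition
    (C d : ℕ) (hC : 2 ≤ C) (star : Fin C) (z : Fin C → ℝ)
    (p : Fin C → ℝ) (hp : ∀ c, p c = Real.exp (z c) / ∑ j, Real.exp (z j))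
    (pdag : ℝ) (hpdag : pdag = 1 - p star)
    (ρ : {c : Fin C // c ≠ star} → ℝ) (hρ : ∀ j, ρ j = p j / pdag)
    (Jz : Matrix (Fin C) (Fin d) ℝ)
    (Jm : Matrix {c : Fin C // c ≠ star} (Fin d) ℝ)
    (hJm : ∀ c j, Jm c j = Jz c j)
    (Js : Fin d → ℝ)
    (hJs : ∀ j, Js j = -Jz star j + ∑ c, ρ c * Jm c j) :
    Jz.transpose * (Matrix.diagonal p - Matrix.vecMulVec p p) * Jz
      = (p star * pdag) • Matrix.vecMulVec Js Js
        + pdag • (Jm.transpose * (Matrix.diagonal ρ - Matrix.vecMulVec ρ ρ) * Jm) := by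
  have hD : pdag ≠ 0 := by
    have := softmax_lt_one hC star z
    rw [← hp] at this
    rw [hpdag]
    exact (sub_pos.mpr this).ne'
  have hpρ : ∀ c : {c : Fin C // c ≠ star}, p c = pdag * ρ c := fun c => by
    rw [hρ, mul_div_cancel₀ _ hD]
  have hsplit : ∀ f : Fin C → ℝ,
      ∑ c, p c * f c = p star * f star + pdag * ∑ c : {c : Fin C // c ≠ star}, ρ c * f c :=
    fun f => by
      rw [Fintype.sum_eq_add_sum_subtype_ne _ star, Finset.mul_sum]
      congr 1
      exact Finset.sum_congr rfl fun c _ => by rw [hpρ, mul_assoc]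
  ext i j
  rw [Matrix.add_apply, Matrix.smul_apply, Matrix.smul_apply, covariance_apply, covariance_apply,
    Matrix.vecMulVec_apply, hJs, hJs, hsplit (fun c => Jz c i * Jz c j),
    hsplit (fun c => Jz c i), hsplit (fun c => Jz c j)]
  simp only [hJm, smul_eq_mul]
  rw [hpdag]
  ring
end

section
/- FGN is a positive semidefinite under-approximation of the multiclass GGN (Proposition 1, item 1): for every logit vector z ∈ ℝ^C with C ≥ 2 and true class ⋆ and every matrix J_z ∈ ℝ^{C×d}, the matrices satisfy 0 ⪯ H^FGN ⪯ H^GGN in the Loewner order, where H^FGN = p_⋆ p_† J_s^T J_s and H^GGN = J_z^T(diag(p) − p p^T)J_z. -/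
/-!
Write `M = ρᵀ J_{-⋆}` for the mean competitor row under the conditional distribution `ρ`. By the
law of total variance for the split into true class and competitors, the between-group part of
`Jzᵀ (diag p - p pᵀ) Jz` is `p_⋆ p_† Jsᵀ Js`, and what remains is the within-group part
`∑_{c ≠ ⋆} p_c (J_c - M)ᵀ (J_c - M)`, a nonnegative combination of rank-one positive semidefinite
matrices (`ggn_sub_fgn_eq`). Positivity of `p_†`, which makes `ρ` well defined, uses `2 ≤ C`.
-/

/-- A real outer square is positive semidefinite, also after nonnegative scaling. -/
lemma posSemidef_smul_vecMulVec_self {n : Type*} [Fintype n] {a : ℝ} (ha : 0 ≤ a) (v : n → ℝ) :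
    (a • Matrix.vecMulVec v v).PosSemidef := by
  have h := Matrix.posSemidef_vecMulVec_self_star v
  rw [star_trivial] at h
  exact h.smul ha

lemma sum_eq_add_sum_ne {ι : Type*} [Fintype ι] [DecidableEq ι] (s : ι) (f : ι → ℝ) :
    ∑ c, f c = f s + ∑ c : {c : ι // c ≠ s}, f c := by
  rw [Fintype.sum_eq_add_sum_compl s f]
  congr 1
  exact Finset.sum_subtype _ (by simp) f

/-- Law of total variance: the gap between GGN and FGN is the within-competitor covariance, where
`M` is the mean competitor row and `q` the total competitor mass. -/
lemma ggn_sub_fgn_eq {ι n : Type*} [Fintype ι] [DecidableEq ι] [Fintype n] (s : ι)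
    (p : ι → ℝ) (q : ℝ) (hq : q = 1 - p s) (hsum : ∑ c : {c : ι // c ≠ s}, p c = q)
    (J : Matrix ι n ℝ) (M : n → ℝ)
    (hM : ∀ j, ∑ c : {c : ι // c ≠ s}, p c * J c j = q * M j) :
    J.transpose * (Matrix.diagonal p - Matrix.vecMulVec p p) * J
      - (p s * q) • Matrix.vecMulVec (fun j => -J s j + M j) (fun j => -J s j + M j)
    = ∑ c : {c : ι // c ≠ s},
        p c • Matrix.vecMulVec (fun j => J c j - M j) (fun j => J c j - M j) := by
  ext i j
  have hcol : ∀ k, ∑ c, p c * J c k = p s * J s k + q * M k := fun k => by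
    rw [sum_eq_add_sum_ne s, hM]
  have hggn : (J.transpose * (Matrix.diagonal p - Matrix.vecMulVec p p) * J) i j
      = ∑ c, p c * J c i * J c j - (∑ c, p c * J c i) * ∑ c, p c * J c j := by
    rw [Matrix.mul_sub, Matrix.sub_mul, Matrix.sub_apply, Matrix.mul_vecMulVec,
      Matrix.vecMulVec_mul, Matrix.vecMulVec_apply, Matrix.mul_apply]
    simp only [Matrix.mul_diagonal, Matrix.transpose_apply, Matrix.mulVec, Matrix.vecMul,
      dotProduct, mul_comm (J _ i)]
  have hwithin : ∑ c : {c : ι // c ≠ s}, p c * ((J c i - M i) * (J c j - M j))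
      = ∑ c : {c : ι // c ≠ s}, p c * J c i * J c j - q * M i * M j := by
    calc _ = ∑ c : {c : ι // c ≠ s}, (p c * J c i * J c j - p c * J c i * M j
              - p c * J c j * M i + p c * (M i * M j)) :=
          Finset.sum_congr rfl fun c _ => by ring
      _ = _ := by
          rw [Finset.sum_add_distrib, Finset.sum_sub_distrib, Finset.sum_sub_distrib,
            ← Finset.sum_mul, ← Finset.sum_mul, ← Finset.sum_mul, hM, hM, hsum]
          ring
  rw [Matrix.sub_apply, hggn, hcol, hcol, sum_eq_add_sum_ne s, Matrix.sum_apply]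
  simp only [Matrix.smul_apply, Matrix.vecMulVec_apply, smul_eq_mul]
  rw [hwithin, hq]
  ring

/-- Proposition 1, item 1: FGN is a PSD under-approximation of the multiclass
GGN, i.e. `0 ⪯ H^FGN ⪯ H^GGN` in the Loewner order, where
`H^FGN = p_⋆ p_† Jsᵀ Js` and `H^GGN = Jzᵀ (diag p - p pᵀ) Jz`. -/
theorem fgn_psd_under_approximation
    (C d : ℕ) (hC : 2 ≤ C) (star : Fin C) (z : Fin C → ℝ)
    (p : Fin C → ℝ) (hp : ∀ c, p c = Real.exp (z c) / ∑ j, Real.exp (z j))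
    (pdag : ℝ) (hpdag : pdag = 1 - p star)
    (ρ : {c : Fin C // c ≠ star} → ℝ) (hρ : ∀ j, ρ j = p j / pdag)
    (Jz : Matrix (Fin C) (Fin d) ℝ)
    (Js : Fin d → ℝ)
    (hJs : ∀ j, Js j = -Jz star j + ∑ c : {c : Fin C // c ≠ star}, ρ c * Jz c j) :
    ((p star * pdag) • Matrix.vecMulVec Js Js).PosSemidef ∧
    (Jz.transpose * (Matrix.diagonal p - Matrix.vecMulVec p p) * Jz
      - (p star * pdag) • Matrix.vecMulVec Js Js).PosSemidef := by
  have : Nonempty (Fin C) := ⟨star⟩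
  have hZ : 0 < ∑ j, Real.exp (z j) :=
    Finset.sum_pos (fun j _ => Real.exp_pos _) Finset.univ_nonempty
  have hpos : ∀ c, 0 < p c := fun c => by rw [hp]; exact div_pos (Real.exp_pos _) hZ
  have hone : ∑ c, p c = 1 := by
    simp only [hp]
    rw [← Finset.sum_div, div_self hZ.ne']
  have hsum : ∑ c : {c : Fin C // c ≠ star}, p c = pdag := by
    have h := sum_eq_add_sum_ne star p
    linarith
  have hq : 0 < pdag := by
    have : Nontrivial (Fin C) := Fin.nontrivial_iff_two_le.mpr hC
    obtain ⟨c, hc⟩ := exists_ne star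
    rw [← hsum]
    exact Finset.sum_pos (fun j _ => hpos _) ⟨⟨c, hc⟩, Finset.mem_univ _⟩
  refine ⟨posSemidef_smul_vecMulVec_self (mul_pos (hpos _) hq).le _, ?_⟩
  have hM : ∀ j, ∑ c : {c : Fin C // c ≠ star}, p c * Jz c j
      = pdag * ∑ c : {c : Fin C // c ≠ star}, ρ c * Jz c j := fun j => by
    rw [Finset.mul_sum]
    refine Finset.sum_congr rfl fun c _ => ?_
    rw [hρ, ← mul_assoc, mul_div_cancel₀ _ hq.ne']
  rw [funext hJs, ggn_sub_fgn_eq star p pdag hpdag hsum Jz _ hM]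
  exact Matrix.posSemidef_sum _ fun c _ => posSemidef_smul_vecMulVec_self (hpos c).le _
end

section
/- Exactness of FGN in the binary case (Proposition 1, item 2): if C = 2, then for every logit vector z ∈ ℝ² with true class ⋆ and every matrix J_z ∈ ℝ^{2×d}, H^FGN = H^GGN, i.e. p_⋆ p_† J_s^T J_s = J_z^T(diag(p) − p p^T)J_z. -/
/-- Proposition 1, item 2: exactness of FGN in the binary case `C = 2`.
Since the single competitor weight is `ρ = 1`, the margin row is
`Js = -J_⋆ + J_{-⋆}` and `H^FGN = p_⋆ p_† Jsᵀ Js` coincides with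
`H^GGN = Jzᵀ (diag p - p pᵀ) Jz`. -/
theorem fgn_exact_binary
    (d : ℕ) (star : Fin 2) (z : Fin 2 → ℝ)
    (p : Fin 2 → ℝ) (hp : ∀ c, p c = Real.exp (z c) / ∑ j, Real.exp (z j))
    (pdag : ℝ) (hpdag : pdag = 1 - p star)
    (Jz : Matrix (Fin 2) (Fin d) ℝ)
    (Js : Fin d → ℝ)
    (hJs : ∀ j, Js j = -Jz star j + ∑ c ∈ Finset.univ.erase star, Jz c j) :
    (p star * pdag) • Matrix.vecMulVec Js Js
      = Jz.transpose * (Matrix.diagonal p - Matrix.vecMulVec p p) * Jz := by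
  have hsum : p 1 = 1 - p 0 := by
    have hpos : 0 < Real.exp (z 0) + Real.exp (z 1) := by positivity
    rw [hp 0, hp 1, Fin.sum_univ_two]
    field_simp
    ring
  have e0 : (Finset.univ.erase (0 : Fin 2)) = {1} := by decide
  have e1 : (Finset.univ.erase (1 : Fin 2)) = {0} := by decide
  -- With `p 1 = 1 - p 0`, `diag p - p pᵀ = p₀ p₁ [[1, -1], [-1, 1]]`, which is the rank-one
  -- form `p₀ p₁ v vᵀ` with `v = ±(-1, 1)`; each entry is then a polynomial identity.
  ext i j
  fin_cases star
  · simp [Matrix.mul_apply, Matrix.vecMulVec_apply, Fin.sum_univ_two, hJs, e0, hpdag, hsum]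
    ring
  · simp [Matrix.mul_apply, Matrix.vecMulVec_apply, Fin.sum_univ_two, hJs, e1, hpdag, hsum]
    ring
end

section
/- Weighted-covariance characterization of the FGN gap (Proposition 1, item 4): for every logit vector z ∈ ℝ^C with C ≥ 2 and true class ⋆ and every J_z ∈ ℝ^{C×d} with competitor rows J_1, …, J_{C−1} and ρ-weighted mean row J̄_ρ = Σ_j ρ_j J_j, one has H^GGN − H^FGN = p_† Σ_{j=1}^{C−1} ρ_j (J_j − J̄_ρ)^T (J_j − J̄_ρ). -/
/-!
Entrywise, writing `𝔼_ρ` for the `ρ`-weighted sum over competitors, the class sum splits as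
`∑_c p_c f_c = p_⋆ f_⋆ + p_† 𝔼_ρ f` (`hsplit` in the proof). Hence `H^GGN`, the covariance of the
rows of `J_z` under `p`, obeys the law of total covariance for the partition `{⋆} ∪ competitors`:
the between-group part is `p_⋆ p_† J_sᵀ J_s = H^FGN`, and the within-group part is `p_†` times the
`ρ`-covariance. As `C ≥ 2` and softmax is strictly positive, `p_† > 0`, so `ρ` is a genuine
probability vector.
-/

/-- Proposition 1, item 4: weighted-covariance characterization of the FGN
gap. With competitor rows `Jz c` (for `c ≠ ⋆`) and ρ-weighted mean row
`J̄_ρ = ∑_c ρ_c Jz c`,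
`H^GGN - H^FGN = p_† ∑_c ρ_c (Jz c - J̄_ρ)ᵀ (Jz c - J̄_ρ)`. -/
theorem fgn_gap_weighted_covariance
    (C d : ℕ) (hC : 2 ≤ C) (star : Fin C) (z : Fin C → ℝ)
    (p : Fin C → ℝ) (hp : ∀ c, p c = Real.exp (z c) / ∑ j, Real.exp (z j))
    (pdag : ℝ) (hpdag : pdag = 1 - p star)
    (ρ : {c : Fin C // c ≠ star} → ℝ) (hρ : ∀ j, ρ j = p j / pdag)
    (Jz : Matrix (Fin C) (Fin d) ℝ)
    (Jbar : Fin d → ℝ)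
    (hJbar : ∀ j, Jbar j = ∑ c : {c : Fin C // c ≠ star}, ρ c * Jz c j)
    (Js : Fin d → ℝ) (hJs : ∀ j, Js j = -Jz star j + Jbar j) :
    Jz.transpose * (Matrix.diagonal p - Matrix.vecMulVec p p) * Jz
      - (p star * pdag) • Matrix.vecMulVec Js Js
      = pdag • ∑ c : {c : Fin C // c ≠ star},
          ρ c • Matrix.vecMulVec (fun j => Jz c j - Jbar j) (fun j => Jz c j - Jbar j) := by
  have hZ : 0 < ∑ j, Real.exp (z j) :=
    Finset.sum_pos (fun j _ => Real.exp_pos _) ⟨star, Finset.mem_univ _⟩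
  have hpos : ∀ c, 0 < p c := fun c => by
    rw [hp]
    exact div_pos (Real.exp_pos _) hZ
  have hsum : ∑ c, p c = 1 := by
    simp only [hp]
    rw [← Finset.sum_div, div_self hZ.ne']
  have hpdag_sum : pdag = ∑ c : {c : Fin C // c ≠ star}, p c := by
    have h := Fintype.sum_eq_add_sum_subtype_ne p star
    linarith
  have hpdag_ne : pdag ≠ 0 := by
    have : Nontrivial (Fin C) := Fin.nontrivial_iff_two_le.mpr hC
    obtain ⟨c, hc⟩ := exists_ne star
    rw [hpdag_sum]
    exact (Finset.sum_pos (fun c _ => hpos _) ⟨⟨c, hc⟩, Finset.mem_univ _⟩).ne'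
  have hpρ : ∀ c : {c : Fin C // c ≠ star}, p c = pdag * ρ c := fun c => by
    rw [hρ, mul_div_cancel₀ _ hpdag_ne]
  have hρsum : ∑ c, ρ c = 1 := by
    simp only [hρ]
    rw [← Finset.sum_div, ← hpdag_sum, div_self hpdag_ne]
  have hsplit : ∀ f : Fin C → ℝ, ∑ c, p c * f c
      = p star * f star + pdag * ∑ c : {c : Fin C // c ≠ star}, ρ c * f c := fun f => by
    rw [Fintype.sum_eq_add_sum_subtype_ne _ star, Finset.mul_sum]
    simp only [hpρ, mul_assoc]
  ext a b
  have hGGN : (Jz.transpose * (Matrix.diagonal p - Matrix.vecMulVec p p) * Jz) a b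
      = ∑ c, p c * (Jz c a * Jz c b) - (∑ c, p c * Jz c a) * ∑ c, p c * Jz c b := by
    rw [Matrix.mul_sub, Matrix.sub_mul, Matrix.sub_apply, Matrix.mul_apply,
      Matrix.mul_vecMulVec, Matrix.vecMulVec_mul, Matrix.vecMulVec_apply]
    simp only [Matrix.mul_diagonal, Matrix.transpose_apply, Matrix.mulVec, Matrix.vecMul,
      dotProduct]
    congr 1
    · exact Finset.sum_congr rfl fun c _ => by ring
    · congr 1
      exact Finset.sum_congr rfl fun c _ => by ring
  have hcov : ∑ c : {c : Fin C // c ≠ star}, ρ c * ((Jz c a - Jbar a) * (Jz c b - Jbar b))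
      = ∑ c : {c : Fin C // c ≠ star}, ρ c * (Jz c a * Jz c b) - Jbar a * Jbar b := by
    have h : ∀ c : {c : Fin C // c ≠ star}, ρ c * ((Jz c a - Jbar a) * (Jz c b - Jbar b))
        = ρ c * (Jz c a * Jz c b) - ρ c * Jz c a * Jbar b - ρ c * Jz c b * Jbar a
          + ρ c * (Jbar a * Jbar b) := fun c => by ring
    simp only [h, Finset.sum_add_distrib, Finset.sum_sub_distrib, ← Finset.sum_mul]
    rw [hρsum, ← hJbar, ← hJbar]
    ring
  rw [Matrix.sub_apply, hGGN, hsplit (fun c => Jz c a * Jz c b), hsplit (fun c => Jz c a),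
    hsplit (fun c => Jz c b), ← hJbar, ← hJbar]
  simp only [Matrix.smul_apply, Matrix.sum_apply, Matrix.vecMulVec_apply, smul_eq_mul]
  rw [hcov, hJs, hJs, hpdag]
  ring
end

section
/- Trace decomposition of the softmax covariance: for every logit vector z ∈ ℝ^C with C ≥ 2 and true class ⋆, writing ξ = 1 − ‖ρ‖₂², one has Tr(diag(p) − p p^T) = 2 p_⋆ p_† + p_†² ξ, Tr(p_⋆ p_† (∇_z s)(∇_z s)^T) = p_⋆ p_† (2 − ξ), and the trace of the dropped residual block equals p_† ξ, so the full trace is the sum of the retained and dropped traces. -/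
/-!
Since `p` sums to `1`, the wrong-class probabilities sum to `p_†`, which is positive because
there are at least two classes. Hence `p_j = p_† ρ_j` off the true class, `ρ` sums to `1` there,
and `∑ p_j² = p_†² (1 - ξ)`. Splitting each trace into its entry at the true class and the
remaining diagonal entries expresses it through these sums; the additivity of the traces is
then the identity `p_⋆ p_† (2 - ξ) + p_† ξ = 2 p_⋆ p_† + p_†² ξ`, valid as `1 - p_⋆ = p_†`.
-/

/-- Trace decomposition of the softmax covariance: with `ξ = 1 - ‖ρ‖₂²`,
`Tr(diag p - p pᵀ) = 2 p_⋆ p_† + p_†² ξ`, the retained true-vs-rest term has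
trace `p_⋆ p_† (2 - ξ)`, the dropped residual block has trace `p_† ξ`, and
the full trace is the sum of the retained and dropped traces. -/
theorem softmax_covariance_trace_decomposition
    (C : ℕ) (hC : 2 ≤ C) (star : Fin C) (z : Fin C → ℝ)
    (p : Fin C → ℝ) (hp : ∀ c, p c = Real.exp (z c) / ∑ j, Real.exp (z j))
    (pdag : ℝ) (hpdag : pdag = 1 - p star)
    (ρ : Fin C → ℝ) (hρ : ∀ j, j ≠ star → ρ j = p j / pdag)
    (ξ : ℝ) (hξ : ξ = 1 - ∑ j ∈ Finset.univ.erase star, ρ j ^ 2)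
    (g : Fin C → ℝ) (hg : ∀ c, g c = if c = star then -1 else ρ c)
    (B : Matrix (Fin C) (Fin C) ℝ)
    (hB : ∀ c c', B c c' =
      if c = star ∨ c' = star then 0
      else (if c = c' then ρ c else 0) - ρ c * ρ c') :
    Matrix.trace (Matrix.diagonal p - Matrix.vecMulVec p p)
        = 2 * (p star * pdag) + pdag ^ 2 * ξ ∧
    Matrix.trace ((p star * pdag) • Matrix.vecMulVec g g)
        = p star * pdag * (2 - ξ) ∧
    Matrix.trace (pdag • B) = pdag * ξ ∧
    Matrix.trace (Matrix.diagonal p - Matrix.vecMulVec p p)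
        = Matrix.trace ((p star * pdag) • Matrix.vecMulVec g g)
          + Matrix.trace (pdag • B) := by
  have hS : 0 < ∑ j, Real.exp (z j) :=
    Finset.sum_pos (fun j _ => Real.exp_pos _) ⟨star, Finset.mem_univ _⟩
  have hpos : ∀ c, 0 < p c := fun c => by
    rw [hp]
    exact div_pos (Real.exp_pos _) hS
  have hsum : ∑ c, p c = 1 := by
    simp_rw [hp]
    rw [← Finset.sum_div, div_self hS.ne']
  have hsplit : ∀ f : Fin C → ℝ,
      ∑ c, f c = f star + ∑ c ∈ Finset.univ.erase star, f c :=
    fun f => (Finset.add_sum_erase _ f (Finset.mem_univ star)).symm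
  have hrest : ∑ c ∈ Finset.univ.erase star, p c = pdag := by
    have h := hsplit p
    linarith
  -- `2 ≤ C` provides a class other than `star`, so the divisor in `ρ` is nonzero.
  have hdag : 0 < pdag := by
    rw [← hrest]
    apply Finset.sum_pos fun j _ => hpos j
    rw [← Finset.card_pos, Finset.card_erase_of_mem (Finset.mem_univ _),
      Finset.card_univ, Fintype.card_fin]
    omega
  have hp_eq : ∀ c ∈ Finset.univ.erase star, p c = pdag * ρ c := fun c hc => by
    rw [hρ c (Finset.ne_of_mem_erase hc)]
    field_simp
  have hρ_sum : ∑ c ∈ Finset.univ.erase star, ρ c = 1 := by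
    have h : pdag * ∑ c ∈ Finset.univ.erase star, ρ c = pdag * 1 := by
      rw [Finset.mul_sum, ← Finset.sum_congr rfl hp_eq, hrest, mul_one]
    exact mul_left_cancel₀ hdag.ne' h
  have hρ_sq : ∑ c ∈ Finset.univ.erase star, ρ c ^ 2 = 1 - ξ := by linarith
  have hp_sq : ∑ c ∈ Finset.univ.erase star, p c * p c = pdag ^ 2 * (1 - ξ) := by
    rw [← hρ_sq, Finset.mul_sum]
    refine Finset.sum_congr rfl fun c hc => ?_
    rw [hp_eq c hc]
    ring
  have hfull : Matrix.trace (Matrix.diagonal p - Matrix.vecMulVec p p)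
      = 2 * (p star * pdag) + pdag ^ 2 * ξ := by
    rw [Matrix.trace_sub, Matrix.trace_diagonal, hsum]
    simp only [Matrix.trace, Matrix.diag_apply, Matrix.vecMulVec_apply]
    rw [hsplit, hp_sq, hpdag]
    ring
  have hretained : Matrix.trace ((p star * pdag) • Matrix.vecMulVec g g)
      = p star * pdag * (2 - ξ) := by
    have h : ∑ c ∈ Finset.univ.erase star, g c * g c = 1 - ξ := by
      rw [← hρ_sq]
      refine Finset.sum_congr rfl fun c hc => ?_
      rw [hg, if_neg (Finset.ne_of_mem_erase hc)]
      ring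
    rw [Matrix.trace_smul, smul_eq_mul]
    simp only [Matrix.trace, Matrix.diag_apply, Matrix.vecMulVec_apply]
    rw [hsplit, h, hg star, if_pos rfl]
    ring
  have hdropped : Matrix.trace (pdag • B) = pdag * ξ := by
    have h : ∑ c ∈ Finset.univ.erase star, B c c = ξ := by
      have h' : ∑ c ∈ Finset.univ.erase star, B c c
          = ∑ c ∈ Finset.univ.erase star, (ρ c - ρ c ^ 2) := by
        refine Finset.sum_congr rfl fun c hc => ?_
        rw [hB, if_neg (by simpa using Finset.ne_of_mem_erase hc), if_pos rfl]
        ring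
      rw [h', Finset.sum_sub_distrib, hρ_sum, hρ_sq]
      ring
    rw [Matrix.trace_smul, smul_eq_mul]
    simp only [Matrix.trace, Matrix.diag_apply]
    rw [hsplit, h, hB star star, if_pos (Or.inl rfl), zero_add]
  refine ⟨hfull, hretained, hdropped, ?_⟩
  rw [hfull, hretained, hdropped, hpdag]
  ring
end
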